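/- On an almost quaternion-Hermitian manifold, for any local adapted basis I,J,K the Nijenhuis (0,3)-tensor of I is determined by the exterior derivatives of the Kähler forms of J and K: 2N_I = (I_{(12)} + I_{(13)} + I_{(23)} − 1) J_{(23)} (J dω_J − K dω_K) = (1 − I_{(12)}) (K_{(23)} − J_{(23)}) (J dω_J − K dω_K). In particular, if J dω_J = K dω_K then I is integrable. -/

import Mathlib

/-!  Synthetic (Koszul-style) model of an almost quaternion-Hermitian `4n`-manifold.

`C` plays the role of the commutative ℝ-algebra of smooth functions and `V` that of
the `C`-module of vector fields, equipped with a directional derivative `D`, a Lie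
bracket, a Riemannian metric `g` together with its Levi-Civita connection `nab`
(characterised by being torsion-free and metric), a local adapted basis `I, J, K`
of anticommuting almost complex structures with `K = I J`, each compatible with the
metric, and a (local) orthonormal frame.  -/

noncomputable section

open scoped BigOperators

structure AQH (n : ℕ) (C : Type*) (V : Type*) [CommRing C] [Algebra ℝ C]
    [AddCommGroup V] [Module C V] where
  /-- derivative of a function along a vector field -/
  D : V → C → C
  D_add : ∀ X f g, D X (f + g) = D X f + D X g
  D_mul : ∀ X f g, D X (f * g) = f * D X g + g * D X f
  D_const : ∀ X (r : ℝ), D X (algebraMap ℝ C r) = 0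
  D_addX : ∀ X Y f, D (X + Y) f = D X f + D Y f
  D_smulX : ∀ (f : C) (X : V) (h : C), D (f • X) h = f * D X h
  /-- the Lie bracket of vector fields -/
  bracket : V → V → V
  bracket_skew : ∀ X Y, bracket X Y = -bracket Y X
  bracket_add : ∀ X Y Z, bracket X (Y + Z) = bracket X Y + bracket X Z
  bracket_smul : ∀ X (f : C) Y, bracket X (f • Y) = f • bracket X Y + (D X f) • Y
  bracket_jacobi : ∀ X Y Z,
    bracket X (bracket Y Z) + bracket Y (bracket Z X) + bracket Z (bracket X Y) = 0
  D_bracket : ∀ X Y f, D (bracket X Y) f = D X (D Y f) - D Y (D X f)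
  /-- the Riemannian metric -/
  g : V → V → C
  g_symm : ∀ X Y, g X Y = g Y X
  g_add : ∀ X Y Z, g (X + Y) Z = g X Z + g Y Z
  g_smul : ∀ (f : C) X Y, g (f • X) Y = f * g X Y
  /-- the Levi-Civita connection -/
  nab : V → V → V
  nab_addX : ∀ X Y Z, nab (X + Y) Z = nab X Z + nab Y Z
  nab_smulX : ∀ (f : C) X Y, nab (f • X) Y = f • nab X Y
  nab_add : ∀ X Y Z, nab X (Y + Z) = nab X Y + nab X Z
  nab_leibniz : ∀ X (f : C) Y, nab X (f • Y) = f • nab X Y + (D X f) • Y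
  torsion_free : ∀ X Y, nab X Y - nab Y X = bracket X Y
  nab_metric : ∀ X Y Z, D X (g Y Z) = g (nab X Y) Z + g Y (nab X Z)
  /-- the (local) adapted basis of almost complex structures -/
  I : V → V
  J : V → V
  K : V → V
  I_lin : ∀ (f : C) X Y, I (f • X + Y) = f • I X + I Y
  J_lin : ∀ (f : C) X Y, J (f • X + Y) = f • J X + J Y
  K_lin : ∀ (f : C) X Y, K (f • X + Y) = f • K X + K Y
  I_sq : ∀ X, I (I X) = -X
  J_sq : ∀ X, J (J X) = -X
  K_def : ∀ X, K X = I (J X)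
  anticomm : ∀ X, I (J X) = -J (I X)
  I_metric : ∀ X Y, g (I X) (I Y) = g X Y
  J_metric : ∀ X Y, g (J X) (J Y) = g X Y
  /-- a (local) orthonormal frame -/
  frame : Fin (4 * n) → V
  frame_orthonormal : ∀ i j, g (frame i) (frame j) = if i = j then 1 else 0
  frame_span : ∀ X, X = ∑ i, g X (frame i) • frame i

namespace AQH

section ops

variable {C V : Type*} [CommRing C]

/-- the operator `A_(1)` on covariant 3-tensors -/
def op1 (A : V → V) (ψ : V → V → V → C) : V → V → V → C := fun X Y Z => -ψ (A X) Y Z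

/-- the operator `A_(2)` on covariant 3-tensors -/
def op2 (A : V → V) (ψ : V → V → V → C) : V → V → V → C := fun X Y Z => -ψ X (A Y) Z

/-- the operator `A_(3)` on covariant 3-tensors -/
def op3 (A : V → V) (ψ : V → V → V → C) : V → V → V → C := fun X Y Z => -ψ X Y (A Z)

/-- the operator `A_(12) = A_(1) A_(2)` on covariant 3-tensors -/
def op12 (A : V → V) (ψ : V → V → V → C) : V → V → V → C := fun X Y Z => ψ (A X) (A Y) Z

/-- the operator `A_(13) = A_(1) A_(3)` on covariant 3-tensors -/
def op13 (A : V → V) (ψ : V → V → V → C) : V → V → V → C := fun X Y Z => ψ (A X) Y (A Z)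

/-- the operator `A_(23) = A_(2) A_(3)` on covariant 3-tensors -/
def op23 (A : V → V) (ψ : V → V → V → C) : V → V → V → C := fun X Y Z => ψ X (A Y) (A Z)

/-- the operator `𝓛_A = A_(12) + A_(13) + A_(23)` on three-forms -/
def calL (A : V → V) (ψ : V → V → V → C) : V → V → V → C :=
  fun X Y Z => op12 A ψ X Y Z + op13 A ψ X Y Z + op23 A ψ X Y Z

/-- the action `(A ν)(X) = -ν (A X)` of `A` on a one-form -/
def act1 (A : V → V) (ν : V → C) : V → C := fun X => -ν (A X)

/-- the action `(A ψ)(X,Y,Z) = -ψ(AX,AY,AZ)` of `A` on a three-form -/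
def act3 (A : V → V) (ψ : V → V → V → C) : V → V → V → C :=
  fun X Y Z => -ψ (A X) (A Y) (A Z)

/-- wedge product of two one-forms -/
def wedge11 (α β : V → C) : V → V → C := fun X Y => α X * β Y - α Y * β X

/-- wedge product of a one-form and a two-form -/
def wedge12 (ν : V → C) (ω : V → V → C) : V → V → V → C :=
  fun X Y Z => ν X * ω Y Z - ν Y * ω X Z + ν Z * ω X Y

/-- wedge product of two two-forms -/
def wedge22 (α β : V → V → C) : V → V → V → V → C := fun X Y Z W =>
  α X Y * β Z W - α X Z * β Y W + α X W * β Y Z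
    + α Z W * β X Y - α Y W * β X Z + α Y Z * β X W

/-- a (0,3)-tensor is an alternating three-form -/
def IsAlt3 (T : V → V → V → C) : Prop :=
  (∀ X Y Z, T Y X Z = -T X Y Z) ∧ (∀ X Y Z, T X Z Y = -T X Y Z)

variable [AddCommGroup V] [Module C V]

/-- `C`-linearity (tensoriality) of a three-form in its first argument -/
def Lin3 (T : V → V → V → C) : Prop :=
  ∀ (f : C) X X' Y Z, T (f • X + X') Y Z = f * T X Y Z + T X' Y Z

/-- `C`-linearity (tensoriality) of a one-form -/
def Lin1 (ν : V → C) : Prop := ∀ (f : C) X X', ν (f • X + X') = f * ν X + ν X'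

end ops

section derived

variable {n : ℕ} {C V : Type*} [CommRing C] [Algebra ℝ C] [AddCommGroup V] [Module C V]
  [Module ℝ V] [IsScalarTower ℝ C V]

variable (M : AQH n C V)

/-- the Kähler form `ω_A(X,Y) = g(X, A Y)` -/
def omega (A : V → V) : V → V → C := fun X Y => M.g X (A Y)

/-- `(∇_X A) Y` -/
def nabA (A : V → V) : V → V → V := fun X Y => M.nab X (A Y) - A (M.nab X Y)

/-- covariant derivative of a 2-form: `(∇_X ψ)(Y,Z)` -/
def nab2 (ψ : V → V → C) : V → V → V → C :=
  fun X Y Z => M.D X (ψ Y Z) - ψ (M.nab X Y) Z - ψ Y (M.nab X Z)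

/-- covariant derivative of a 4-form -/
def nab4 (ψ : V → V → V → V → C) : V → V → V → V → V → C :=
  fun X Y Z W U => M.D X (ψ Y Z W U) - ψ (M.nab X Y) Z W U - ψ Y (M.nab X Z) W U
    - ψ Y Z (M.nab X W) U - ψ Y Z W (M.nab X U)

/-- exterior derivative of a one-form -/
def d1 (ν : V → C) : V → V → C :=
  fun X Y => M.D X (ν Y) - M.D Y (ν X) - ν (M.bracket X Y)

/-- exterior derivative of a two-form -/
def d2 (ψ : V → V → C) : V → V → V → C :=
  fun X Y Z => M.D X (ψ Y Z) - M.D Y (ψ X Z) + M.D Z (ψ X Y)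
    - ψ (M.bracket X Y) Z + ψ (M.bracket X Z) Y - ψ (M.bracket Y Z) X

/-- exterior derivative of a four-form -/
def d4 (ψ : V → V → V → V → C) : V → V → V → V → V → C := fun X Y Z W U =>
  M.D X (ψ Y Z W U) - M.D Y (ψ X Z W U) + M.D Z (ψ X Y W U) - M.D W (ψ X Y Z U)
      + M.D U (ψ X Y Z W)
    - ψ (M.bracket X Y) Z W U + ψ (M.bracket X Z) Y W U - ψ (M.bracket X W) Y Z U
      + ψ (M.bracket X U) Y Z W
    - ψ (M.bracket Y Z) X W U + ψ (M.bracket Y W) X Z U - ψ (M.bracket Y U) X Z W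
    - ψ (M.bracket Z W) X Y U + ψ (M.bracket Z U) X Y W
    - ψ (M.bracket W U) X Y Z

/-- the Nijenhuis tensor `N_A(X,Y)` -/
def nijV (A : V → V) : V → V → V := fun X Y =>
  M.bracket X Y + A (M.bracket (A X) Y) + A (M.bracket X (A Y)) - M.bracket (A X) (A Y)

/-- the Nijenhuis `(0,3)`-tensor `N_A(X,Y,Z) = g(X, N_A(Y,Z))` -/
def nij3 (A : V → V) : V → V → V → C := fun X Y Z => M.g X (M.nijV A Y Z)

/-- the induced inner product of two 2-forms,
`⟨ψ,φ⟩ = (1/2!) ψ(e_i,e_j) φ(e_i,e_j)` -/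
def inner2 (ψ φ : V → V → C) : C :=
  (1/2 : ℝ) • ∑ i, ∑ j, ψ (M.frame i) (M.frame j) * φ (M.frame i) (M.frame j)

/-- the contraction `(Λ_A β)(X) = ⟨X ⌟ β, ω_A⟩` of a three-form -/
def Lam (A : V → V) (β : V → V → V → C) : V → C :=
  fun X => (1/2 : ℝ) •
    ∑ i, ∑ j, β X (M.frame i) (M.frame j) * M.omega A (M.frame i) (M.frame j)

/-- `λ_I(X) = (1/2n) ⟨∇_X ω_J, ω_K⟩` -/
def lambdaI : V → C := fun X =>
  (1/(2*(n:ℝ))) • M.inner2 (fun Y Z => M.nab2 (M.omega M.J) X Y Z) (M.omega M.K)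

/-- `λ_J(X) = (1/2n) ⟨∇_X ω_K, ω_I⟩` -/
def lambdaJ : V → C := fun X =>
  (1/(2*(n:ℝ))) • M.inner2 (fun Y Z => M.nab2 (M.omega M.K) X Y Z) (M.omega M.I)

/-- `λ_K(X) = (1/2n) ⟨∇_X ω_I, ω_J⟩` -/
def lambdaK : V → C := fun X =>
  (1/(2*(n:ℝ))) • M.inner2 (fun Y Z => M.nab2 (M.omega M.I) X Y Z) (M.omega M.J)

/-- codifferential of a two-form -/
def codiff2 (ψ : V → V → C) : V → C := fun Z => -∑ i, M.nab2 ψ (M.frame i) (M.frame i) Z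

/-- codifferential of a four-form -/
def codiff4 (ψ : V → V → V → V → C) : V → V → V → C :=
  fun X Y Z => -∑ i, M.nab4 ψ (M.frame i) (M.frame i) X Y Z

/-- `β_I = J dω_J + K dω_K` -/
def betaI : V → V → V → C := fun X Y Z =>
  act3 M.J (M.d2 (M.omega M.J)) X Y Z + act3 M.K (M.d2 (M.omega M.K)) X Y Z

/-- `β_J = K dω_K + I dω_I` -/
def betaJ : V → V → V → C := fun X Y Z =>
  act3 M.K (M.d2 (M.omega M.K)) X Y Z + act3 M.I (M.d2 (M.omega M.I)) X Y Z

/-- `β_K = I dω_I + J dω_J` -/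
def betaK : V → V → V → C := fun X Y Z =>
  act3 M.I (M.d2 (M.omega M.I)) X Y Z + act3 M.J (M.d2 (M.omega M.J)) X Y Z

/-- the intrinsic torsion
`ξ_X Y = -(1/4) Σ_A A (∇_X A) Y + (1/2) Σ_A λ_A(X) A Y` -/
def xi : V → V → V := fun X Y =>
  (-(1/4 : ℝ)) • (M.I (M.nabA M.I X Y) + M.J (M.nabA M.J X Y) + M.K (M.nabA M.K X Y))
    + (1/2 : ℝ) • (M.lambdaI X • M.I Y + M.lambdaJ X • M.J Y + M.lambdaK X • M.K Y)

/-- the one-form `ν^I_4 = I Λ_I β_I` -/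
def nu4I : V → C := act1 M.I (M.Lam M.I M.betaI)

/-- the one-form `ν^J_4 = J Λ_J β_J` -/
def nu4J : V → C := act1 M.J (M.Lam M.J M.betaJ)

/-- the one-form `ν^K_4 = K Λ_K β_K` -/
def nu4K : V → C := act1 M.K (M.Lam M.K M.betaK)

/-- `ν^I_3`, determined by `J Λ_J β_I = (1/(2n-1)) (ν^I_4 + (2n+1)(n-1) ν^I_3)` -/
def nu3I : V → C := fun X =>
  (1/((2*(n:ℝ)+1) * ((n:ℝ)-1))) •
    ((2*(n:ℝ)-1) • act1 M.J (M.Lam M.J M.betaI) X - M.nu4I X)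

/-- `ν^J_3`, determined by `K Λ_K β_J = (1/(2n-1)) (ν^J_4 + (2n+1)(n-1) ν^J_3)` -/
def nu3J : V → C := fun X =>
  (1/((2*(n:ℝ)+1) * ((n:ℝ)-1))) •
    ((2*(n:ℝ)-1) • act1 M.K (M.Lam M.K M.betaJ) X - M.nu4J X)

/-- `ν^K_3`, determined by `I Λ_I β_K = (1/(2n-1)) (ν^K_4 + (2n+1)(n-1) ν^K_3)` -/
def nu3K : V → C := fun X =>
  (1/((2*(n:ℝ)+1) * ((n:ℝ)-1))) •
    ((2*(n:ℝ)-1) • act1 M.I (M.Lam M.I M.betaK) X - M.nu4K X)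

/-- `β^{(E)}_{3I} = -(1/2) Jν^I_3 ∧ ω_J - (1/2) Kν^I_3 ∧ ω_K + (1/(2n-1)) Iν^I_3 ∧ ω_I` -/
def betaE3I : V → V → V → C := fun X Y Z =>
  (-(1/2:ℝ)) • wedge12 (act1 M.J M.nu3I) (M.omega M.J) X Y Z
    + (-(1/2:ℝ)) • wedge12 (act1 M.K M.nu3I) (M.omega M.K) X Y Z
    + (1/(2*(n:ℝ)-1)) • wedge12 (act1 M.I M.nu3I) (M.omega M.I) X Y Z

def betaE3J : V → V → V → C := fun X Y Z =>
  (-(1/2:ℝ)) • wedge12 (act1 M.K M.nu3J) (M.omega M.K) X Y Z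
    + (-(1/2:ℝ)) • wedge12 (act1 M.I M.nu3J) (M.omega M.I) X Y Z
    + (1/(2*(n:ℝ)-1)) • wedge12 (act1 M.J M.nu3J) (M.omega M.J) X Y Z

def betaE3K : V → V → V → C := fun X Y Z =>
  (-(1/2:ℝ)) • wedge12 (act1 M.I M.nu3K) (M.omega M.I) X Y Z
    + (-(1/2:ℝ)) • wedge12 (act1 M.J M.nu3K) (M.omega M.J) X Y Z
    + (1/(2*(n:ℝ)-1)) • wedge12 (act1 M.K M.nu3K) (M.omega M.K) X Y Z

/-- `β_{4I} = -(1/(2n-1)) Iν^I_4 ∧ ω_I` -/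
def beta4I : V → V → V → C := fun X Y Z =>
  (-(1/(2*(n:ℝ)-1))) • wedge12 (act1 M.I M.nu4I) (M.omega M.I) X Y Z

def beta4J : V → V → V → C := fun X Y Z =>
  (-(1/(2*(n:ℝ)-1))) • wedge12 (act1 M.J M.nu4J) (M.omega M.J) X Y Z

def beta4K : V → V → V → C := fun X Y Z =>
  (-(1/(2*(n:ℝ)-1))) • wedge12 (act1 M.K M.nu4K) (M.omega M.K) X Y Z

/-- `β_I^{(3+K)} = β_I - β^{(E)}_{3I} - β_{4I}` -/
def beta3KI : V → V → V → C := fun X Y Z => M.betaI X Y Z - M.betaE3I X Y Z - M.beta4I X Y Z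

def beta3KJ : V → V → V → C := fun X Y Z => M.betaJ X Y Z - M.betaE3J X Y Z - M.beta4J X Y Z

def beta3KK : V → V → V → C := fun X Y Z => M.betaK X Y Z - M.betaE3K X Y Z - M.beta4K X Y Z

/-- `β_I^{(3)} = (1/6) (2 - 𝓛_J - 𝓛_K) β_I^{(3+K)}` -/
def beta3I : V → V → V → C := fun X Y Z =>
  (1/6:ℝ) • ((2:ℝ) • M.beta3KI X Y Z - calL M.J M.beta3KI X Y Z - calL M.K M.beta3KI X Y Z)

def beta3J : V → V → V → C := fun X Y Z =>
  (1/6:ℝ) • ((2:ℝ) • M.beta3KJ X Y Z - calL M.K M.beta3KJ X Y Z - calL M.I M.beta3KJ X Y Z)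

def beta3K : V → V → V → C := fun X Y Z =>
  (1/6:ℝ) • ((2:ℝ) • M.beta3KK X Y Z - calL M.I M.beta3KK X Y Z - calL M.J M.beta3KK X Y Z)

/-- `β_I^{(K)} = (1/6) (4 + 𝓛_J + 𝓛_K) β_I^{(3+K)}` -/
def betaKI : V → V → V → C := fun X Y Z =>
  (1/6:ℝ) • ((4:ℝ) • M.beta3KI X Y Z + calL M.J M.beta3KI X Y Z + calL M.K M.beta3KI X Y Z)

def betaKJ : V → V → V → C := fun X Y Z =>
  (1/6:ℝ) • ((4:ℝ) • M.beta3KJ X Y Z + calL M.K M.beta3KJ X Y Z + calL M.I M.beta3KJ X Y Z)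

def betaKK : V → V → V → C := fun X Y Z =>
  (1/6:ℝ) • ((4:ℝ) • M.beta3KK X Y Z + calL M.I M.beta3KK X Y Z + calL M.J M.beta3KK X Y Z)

/-- the three-form `ψ^{(3)} = (1/12)(β_I^{(3)} + β_J^{(3)} + β_K^{(3)})` determining `ξ_{33}` -/
def psi3 : V → V → V → C := fun X Y Z =>
  (1/12:ℝ) • (M.beta3I X Y Z + M.beta3J X Y Z + M.beta3K X Y Z)

/-- the three-form `ψ^{(K)} = -(1/48)(β_I^{(K)} + β_J^{(K)} + β_K^{(K)})` determining `ξ_{KH}` -/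
def psiK : V → V → V → C := fun X Y Z =>
  (-(1/48:ℝ)) • (M.betaKI X Y Z + M.betaKJ X Y Z + M.betaKK X Y Z)

/-- the three-form `ψ^{(3)}_I` determining `ξ_{3H}` -/
def psi3I : V → V → V → C := fun X Y Z =>
  (-(1/8:ℝ)) • M.beta3I X Y Z
    + (1/48:ℝ) • ((3:ℝ) • (M.beta3I X Y Z + M.beta3J X Y Z + M.beta3K X Y Z)
        + calL M.I (fun a b c => M.beta3I a b c + M.beta3J a b c + M.beta3K a b c) X Y Z)

def psi3J : V → V → V → C := fun X Y Z =>
  (-(1/8:ℝ)) • M.beta3J X Y Z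
    + (1/48:ℝ) • ((3:ℝ) • (M.beta3I X Y Z + M.beta3J X Y Z + M.beta3K X Y Z)
        + calL M.J (fun a b c => M.beta3I a b c + M.beta3J a b c + M.beta3K a b c) X Y Z)

def psi3K : V → V → V → C := fun X Y Z =>
  (-(1/8:ℝ)) • M.beta3K X Y Z
    + (1/48:ℝ) • ((3:ℝ) • (M.beta3I X Y Z + M.beta3J X Y Z + M.beta3K X Y Z)
        + calL M.K (fun a b c => M.beta3I a b c + M.beta3J a b c + M.beta3K a b c) X Y Z)

/-- the three-form `ψ^{(K)}_I` determining `ξ_{K3}` -/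
def psiKI : V → V → V → C := fun X Y Z =>
  (-(1/2:ℝ)) • M.betaKI X Y Z
    + (1/6:ℝ) • (M.betaKI X Y Z + M.betaKJ X Y Z + M.betaKK X Y Z)

def psiKJ : V → V → V → C := fun X Y Z =>
  (-(1/2:ℝ)) • M.betaKJ X Y Z
    + (1/6:ℝ) • (M.betaKI X Y Z + M.betaKJ X Y Z + M.betaKK X Y Z)

def psiKK : V → V → V → C := fun X Y Z =>
  (-(1/2:ℝ)) • M.betaKK X Y Z
    + (1/6:ℝ) • (M.betaKI X Y Z + M.betaKJ X Y Z + M.betaKK X Y Z)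

/-- the one-form `θ^ξ` determining `ξ_{EH}`,
defined by `(6/n)(2n+1)(n-1) θ^ξ(X) = -⟨ξ_{e_i} e_i, X⟩` -/
def thetaXi : V → C := fun X =>
  (-((n:ℝ)/(6*(2*(n:ℝ)+1)*((n:ℝ)-1)))) • ∑ i, M.g (M.xi (M.frame i) (M.frame i)) X

/-- the local one-form `θ^ξ_I`, defined by `(2/n)(2n+1)(n-1) θ^ξ_I(X) = -⟨I ξ_{e_i} I e_i, X⟩` -/
def thetaXiI : V → C := fun X =>
  (-((n:ℝ)/(2*(2*(n:ℝ)+1)*((n:ℝ)-1)))) •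
    ∑ i, M.g (M.I (M.xi (M.frame i) (M.I (M.frame i)))) X

def thetaXiJ : V → C := fun X =>
  (-((n:ℝ)/(2*(2*(n:ℝ)+1)*((n:ℝ)-1)))) •
    ∑ i, M.g (M.J (M.xi (M.frame i) (M.J (M.frame i)))) X

def thetaXiK : V → C := fun X =>
  (-((n:ℝ)/(2*(2*(n:ℝ)+1)*((n:ℝ)-1)))) •
    ∑ i, M.g (M.K (M.xi (M.frame i) (M.K (M.frame i)))) X

/-- `α_I = -λ_I ⊗ g + (1/2)(J_(2) - J_(3)) ∇ω_K` -/
def alphaI : V → V → V → C := fun X Y Z =>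
  -(M.lambdaI X * M.g Y Z)
    + (1/2:ℝ) • (-(M.nab2 (M.omega M.K) X (M.J Y) Z) + M.nab2 (M.omega M.K) X Y (M.J Z))

def alphaJ : V → V → V → C := fun X Y Z =>
  -(M.lambdaJ X * M.g Y Z)
    + (1/2:ℝ) • (-(M.nab2 (M.omega M.I) X (M.K Y) Z) + M.nab2 (M.omega M.I) X Y (M.K Z))

def alphaK : V → V → V → C := fun X Y Z =>
  -(M.lambdaK X * M.g Y Z)
    + (1/2:ℝ) • (-(M.nab2 (M.omega M.J) X (M.I Y) Z) + M.nab2 (M.omega M.J) X Y (M.I Z))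

/-- the one-form `η_I(X) = α_I(e_i; e_i, X)` -/
def etaI : V → C := fun X => ∑ i, M.alphaI (M.frame i) (M.frame i) X

def etaJ : V → C := fun X => ∑ i, M.alphaJ (M.frame i) (M.frame i) X

def etaK : V → C := fun X => ∑ i, M.alphaK (M.frame i) (M.frame i) X

/-- the fundamental four-form `Ω = Σ_A ω_A ∧ ω_A` -/
def Omega4 : V → V → V → V → C := fun X Y Z W =>
  wedge22 (M.omega M.I) (M.omega M.I) X Y Z W
    + wedge22 (M.omega M.J) (M.omega M.J) X Y Z W
    + wedge22 (M.omega M.K) (M.omega M.K) X Y Z W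

/-- the one-form `θ^{d*Ω} = (1/3) Σ_A A Λ_A d*Ω` -/
def thetaDOmega : V → C := fun X =>
  (1/3:ℝ) • (act1 M.I (M.Lam M.I (M.codiff4 M.Omega4)) X
    + act1 M.J (M.Lam M.J (M.codiff4 M.Omega4)) X
    + act1 M.K (M.Lam M.K (M.codiff4 M.Omega4)) X)

/-- the vector-valued torsion: `g(W, T(X,Y)) = T(W,X,Y)` -/
def Tvec (T : V → V → V → C) : V → V → V := fun X Y => ∑ i, T (M.frame i) X Y • M.frame i

/-- the connection `∇ + (1/2) T` associated to a torsion (0,3)-tensor `T` -/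
def nabT (T : V → V → V → C) : V → V → V := fun X Y => M.nab X Y + (1/2:ℝ) • M.Tvec T X Y

/-- a connection is metric -/
def MetricConn (nab' : V → V → V) : Prop :=
  ∀ X Y Z, M.D X (M.g Y Z) = M.g (nab' X Y) Z + M.g Y (nab' X Z)

/-- a connection is quaternionic, with associated local one-forms `γ_I, γ_J, γ_K`:
`∇'_X I = γ_K(X) J - γ_J(X) K`, and cyclically -/
def QuatConn (nab' : V → V → V) (γI γJ γK : V → C) : Prop :=
  (∀ X Y, nab' X (M.I Y) - M.I (nab' X Y) = γK X • M.J Y - γJ X • M.K Y) ∧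
  (∀ X Y, nab' X (M.J Y) - M.J (nab' X Y) = γI X • M.K Y - γK X • M.I Y) ∧
  (∀ X Y, nab' X (M.K Y) - M.K (nab' X Y) = γJ X • M.I Y - γI X • M.J Y)

/-- the HKT condition: `I, J, K` integrable and there is a metric connection
`∇ + (1/2)T` with totally skew torsion making `I, J, K` parallel -/
def IsHKT : Prop :=
  (∀ X Y, M.nijV M.I X Y = 0) ∧ (∀ X Y, M.nijV M.J X Y = 0) ∧
  (∀ X Y, M.nijV M.K X Y = 0) ∧
  ∃ T : V → V → V → C, IsAlt3 T ∧ Lin3 T ∧ M.MetricConn (M.nabT T) ∧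
    (∀ X Y, M.nabT T X (M.I Y) = M.I (M.nabT T X Y)) ∧
    (∀ X Y, M.nabT T X (M.J Y) = M.J (M.nabT T X Y)) ∧
    (∀ X Y, M.nabT T X (M.K Y) = M.K (M.nabT T X Y))

/-- membership of a three-form in `KH`: type `{2,1}` for each `A` and `Λ_A ψ = 0` -/
def InKH3 (ψ : V → V → V → C) : Prop :=
  IsAlt3 ψ ∧ Lin3 ψ ∧
  calL M.I ψ = ψ ∧ calL M.J ψ = ψ ∧ calL M.K ψ = ψ ∧
  M.Lam M.I ψ = 0 ∧ M.Lam M.J ψ = 0 ∧ M.Lam M.K ψ = 0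

/-- the `(0,3)`-tensor of the `KH`-component of the torsion determined by `ψ^{(K)}`:
`3ψ - Σ_A A_(23) ψ` -/
def xiKH3 (ψ : V → V → V → C) : V → V → V → C := fun X Y Z =>
  (3:ℝ) • ψ X Y Z - (op23 M.I ψ X Y Z + op23 M.J ψ X Y Z + op23 M.K ψ X Y Z)

/-- the `(0,3)`-tensor of the `EH`-component of the torsion determined by the
one-form `θ`: `3 e_i ⊗ e_i ∧ θ - Σ_A (e_i ⊗ A e_i ∧ A θ + (2/n) A θ ⊗ ω_A)` -/
def xiEH3 (θ : V → C) : V → V → V → C := fun X Y Z =>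
  (3:ℝ) • ∑ i, M.g (M.frame i) X *
      (M.g (M.frame i) Y * θ Z - M.g (M.frame i) Z * θ Y)
  - ((∑ i, M.g (M.frame i) X *
        (M.g (M.I (M.frame i)) Y * act1 M.I θ Z - M.g (M.I (M.frame i)) Z * act1 M.I θ Y))
    + (∑ i, M.g (M.frame i) X *
        (M.g (M.J (M.frame i)) Y * act1 M.J θ Z - M.g (M.J (M.frame i)) Z * act1 M.J θ Y))
    + (∑ i, M.g (M.frame i) X *
        (M.g (M.K (M.frame i)) Y * act1 M.K θ Z - M.g (M.K (M.frame i)) Z * act1 M.K θ Y)))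
  - (2/(n:ℝ)) • (act1 M.I θ X * M.omega M.I Y Z + act1 M.J θ X * M.omega M.J Y Z
      + act1 M.K θ X * M.omega M.K Y Z)

/-- the intrinsic torsion lies in `(K+E)H`: it is the sum of a `KH`-tensor and an
`EH`-tensor as described in §3 of the paper -/
def inKEH : Prop :=
  ∃ (ψ : V → V → V → C) (θ : V → C), M.InKH3 ψ ∧ Lin1 θ ∧
    ∀ X Y Z, M.g Y (M.xi X Z) = M.xiKH3 ψ X Y Z + M.xiEH3 θ X Y Z

end derived

end AQH

namespace AQH

section helpers

variable {n : ℕ} {C V : Type*} [CommRing C] [Algebra ℝ C] [AddCommGroup V] [Module C V]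
variable (M : AQH n C V)

theorem h_I_add (X Y : V) : M.I (X + Y) = M.I X + M.I Y := by
  simpa using M.I_lin 1 X Y

theorem h_J_add (X Y : V) : M.J (X + Y) = M.J X + M.J Y := by
  simpa using M.J_lin 1 X Y

theorem h_neg_of_add {U W : Type*} [AddCommGroup U] [AddCommGroup W] (F : U → W)
    (h : ∀ x y, F (x + y) = F x + F y) (x : U) : F (-x) = -F x :=
  (AddMonoidHom.mk' F h).map_neg x

theorem h_I_neg (X : V) : M.I (-X) = -M.I X := h_neg_of_add _ (M.h_I_add) X
theorem h_J_neg (X : V) : M.J (-X) = -M.J X := h_neg_of_add _ (M.h_J_add) X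

theorem h_nab_neg (X Y : V) : M.nab X (-Y) = -M.nab X Y :=
  h_neg_of_add (M.nab X) (M.nab_add X) Y

theorem h_nab_negX (X Y : V) : M.nab (-X) Y = -M.nab X Y :=
  h_neg_of_add (fun X => M.nab X Y) (fun a b => M.nab_addX a b Y) X

theorem h_g_neg (X Y : V) : M.g (-X) Y = -M.g X Y :=
  h_neg_of_add (fun X => M.g X Y) (fun a b => M.g_add a b Y) X

theorem h_g_addr (X Y Z : V) : M.g X (Y + Z) = M.g X Y + M.g X Z := by
  rw [M.g_symm, M.g_add, M.g_symm Y, M.g_symm Z]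

theorem h_g_negr (X Y : V) : M.g X (-Y) = -M.g X Y := by
  rw [M.g_symm, h_g_neg, M.g_symm]

theorem h_g_sub (X Y Z : V) : M.g (X - Y) Z = M.g X Z - M.g Y Z := by
  rw [sub_eq_add_neg, M.g_add, h_g_neg, sub_eq_add_neg]

theorem h_g_subr (X Y Z : V) : M.g X (Y - Z) = M.g X Y - M.g X Z := by
  rw [sub_eq_add_neg, h_g_addr, h_g_negr, sub_eq_add_neg]

theorem h_JI (X : V) : M.J (M.I X) = -M.I (M.J X) := by rw [M.anticomm, neg_neg]

theorem h_gI (X Y : V) : M.g (M.I X) Y = -M.g X (M.I Y) := by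
  rw [← M.I_metric X (M.I Y), M.I_sq, h_g_negr, neg_neg]

theorem h_gJ (X Y : V) : M.g (M.J X) Y = -M.g X (M.J Y) := by
  rw [← M.J_metric X (M.J Y), M.J_sq, h_g_negr, neg_neg]

theorem h_gK (X Y : V) : M.g (M.K X) Y = -M.g X (M.K Y) := by
  rw [M.K_def, M.K_def, h_gI, h_gJ, h_JI, h_g_negr, neg_neg]

/-- `tA A X Y Z = (∇_X ω_A)(Y,Z)` -/
def tA (A : V → V) (X Y Z : V) : C := M.g Y (M.nabA A X Z)

theorem h_d2 (A : V → V) (hA : ∀ X Y, M.g (A X) Y = -M.g X (A Y)) (X Y Z : V)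
    (hs : ∀ X Y, A (X - Y) = A X - A Y) :
    M.d2 (M.omega A) X Y Z = M.tA A X Y Z - M.tA A Y X Z + M.tA A Z X Y := by
  have h (U W : V) : M.g U (A W) = -M.g W (A U) := by rw [M.g_symm, hA]
  simp only [d2, omega, tA, nabA, M.nab_metric, ← M.torsion_free, h_g_sub, h_g_subr]
  have h1 := h (M.nab X Y) Z
  have h2 := h (M.nab Y X) Z
  have h3 := h (M.nab X Z) Y
  have h4 := h (M.nab Z X) Y
  have h5 := h (M.nab Y Z) X
  have h6 := h (M.nab Z Y) X
  rw [h3, h5, h6]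
  ring

theorem h_tA_bJ (X Y Z : V) : M.tA M.J X (M.J Y) Z = M.tA M.J X Y (M.J Z) := by
  simp only [tA, nabA, h_g_subr, h_gJ, M.J_sq, h_nab_neg, h_g_negr]; ring

theorem h_tA_cross (X Y Z : V) : M.tA M.J X Y Z =
    M.tA M.J X (M.I Y) (M.I Z) + M.tA M.K X (M.I Y) Z + M.tA M.K X Y (M.I Z) := by
  simp only [tA, nabA, h_g_subr, h_gI, M.K_def, M.I_sq, h_JI, h_I_neg, h_nab_neg, h_g_negr]; ring

theorem h_tA_I (X Y Z : V) : M.tA M.I X Y Z =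
    M.tA M.J X Y (M.K Z) - M.tA M.K X (M.J Y) Z := by
  simp only [tA, nabA, h_g_subr, h_gJ, M.K_def, M.I_sq, M.J_sq, h_JI, h_I_neg, h_nab_neg,
    h_g_negr, neg_neg]; ring

theorem h_tA_bK (X Y Z : V) : M.tA M.K X (M.K Y) Z = M.tA M.K X Y (M.K Z) := by
  simp only [tA, nabA, h_g_subr, M.K_def, h_gI, h_gJ, M.I_sq, M.J_sq, h_JI, h_I_neg, h_nab_neg,
    h_g_negr, neg_neg]; ring

theorem h_tA_neg1 (A : V → V) (hn : ∀ X, A (-X) = -A X) (X Y Z : V) :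
    M.tA A (-X) Y Z = -M.tA A X Y Z := by
  simp only [tA, nabA, h_nab_negX, hn, ← h_g_negr]; congr 1; abel

theorem h_tA_neg2 (A : V → V) (X Y Z : V) :
    M.tA A X (-Y) Z = -M.tA A X Y Z := by
  simp only [tA, h_g_neg]

theorem h_tA_neg3 (A : V → V) (hn : ∀ X, A (-X) = -A X) (X Y Z : V) :
    M.tA A X Y (-Z) = -M.tA A X Y Z := by
  simp only [tA, nabA, h_nab_neg, hn, ← h_g_negr]; congr 1; abel

theorem h_I_sub (X Y : V) : M.I (X - Y) = M.I X - M.I Y := by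
  rw [sub_eq_add_neg, h_I_add, h_I_neg, sub_eq_add_neg]

theorem h_J_sub (X Y : V) : M.J (X - Y) = M.J X - M.J Y := by
  rw [sub_eq_add_neg, h_J_add, h_J_neg, sub_eq_add_neg]

theorem h_K_sub (X Y : V) : M.K (X - Y) = M.K X - M.K Y := by
  simp only [M.K_def, h_J_sub, h_I_sub]

theorem h_K_neg (X : V) : M.K (-X) = -M.K X := by
  simp only [M.K_def, h_J_neg, h_I_neg]

theorem h_nij (X Y Z : V) : M.nij3 M.I X Y Z =
    -M.tA M.I Y (M.I X) Z + M.tA M.I Z (M.I X) Y - M.tA M.I (M.I Y) X Z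
      + M.tA M.I (M.I Z) X Y := by
  simp only [nij3, nijV, tA, nabA, ← M.torsion_free, h_g_subr, h_g_addr, h_gI, h_I_sub, M.I_sq,
    h_g_negr]
  ring

/-- the final linear algebra -/
theorem h_alg (I J K : V → V) (b c : V → V → V → C) (X Y Z : V)
    (In : ∀ X, I (-X) = -I X) (Jn : ∀ X, J (-X) = -J X) (Kn : ∀ X, K (-X) = -K X)
    (II : ∀ X, I (I X) = -X) (JJ : ∀ X, J (J X) = -X) (KK : ∀ X, K (K X) = -X)
    (IJ : ∀ X, I (J X) = K X) (JI : ∀ X, J (I X) = -K X)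
    (JK : ∀ X, J (K X) = I X) (KJ : ∀ X, K (J X) = -I X)
    (KI : ∀ X, K (I X) = J X) (IK : ∀ X, I (K X) = -J X)
    (b1 : ∀ X Y Z, b (-X) Y Z = -b X Y Z) (b2 : ∀ X Y Z, b X (-Y) Z = -b X Y Z)
    (b3 : ∀ X Y Z, b X Y (-Z) = -b X Y Z)
    (c1 : ∀ X Y Z, c (-X) Y Z = -c X Y Z) (c2 : ∀ X Y Z, c X (-Y) Z = -c X Y Z)
    (c3 : ∀ X Y Z, c X Y (-Z) = -c X Y Z)
    (bJ : ∀ X Y Z, b X (J Y) Z = b X Y (J Z)) (cK : ∀ X Y Z, c X (K Y) Z = c X Y (K Z))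
    (cr : ∀ X Y Z, b X Y Z = b X (I Y) (I Z) + c X (I Y) Z + c X Y (I Z))
    (a d e T N : V → V → V → C)
    (ha : ∀ X Y Z, a X Y Z = b X Y (K Z) - c X (J Y) Z)
    (hd : ∀ X Y Z, d X Y Z = b X Y Z - b Y X Z + b Z X Y)
    (he : ∀ X Y Z, e X Y Z = c X Y Z - c Y X Z + c Z X Y)
    (hT : ∀ X Y Z, T X Y Z = -d (J X) (J Y) (J Z) - -e (K X) (K Y) (K Z))
    (hN : ∀ X Y Z, N X Y Z = -a Y (I X) Z + a Z (I X) Y - a (I Y) X Z + a (I Z) X Y) :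
    2 * N X Y Z = (T (I X) (J (I Y)) (J Z) + T (I X) (J Y) (J (I Z)) + T X (J (I Y)) (J (I Z)))
        - T X (J Y) (J Z) ∧
    2 * N X Y Z = (T X (K Y) (K Z) - T X (J Y) (J Z)) -
      (T (I X) (K (I Y)) (K Z) - T (I X) (J (I Y)) (J Z)) := by
  have bK : ∀ X Y Z, b X (K Y) Z = -b X (I Y) (J Z) := by
    intro X Y Z; rw [← bJ, JI, b2, neg_neg]
  have cJ : ∀ X Y Z, c X (J Y) Z = c X (I Y) (K Z) := by
    intro X Y Z; rw [← cK, KI]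
  have crX := fun P Z => cr P X Z
  have crY := fun P Z => cr P Y Z
  simp only [hN, hT, ha, hd, he, In, Jn, Kn, II, JJ, KK, IJ, JI, JK, KJ, KI, IK, b1, b2, b3,
    c1, c2, c3, bJ, cK, bK, cJ, crX, crY]
  constructor <;> ring

end helpers

end AQH

open AQH in
/-- On an almost quaternion-Hermitian manifold, for any local
adapted basis `I, J, K`, the Nijenhuis `(0,3)`-tensor of `I` satisfies
`2 N_I = (I_(12) + I_(13) + I_(23) - 1) J_(23) (J dω_J - K dω_K)
       = (1 - I_(12)) (K_(23) - J_(23)) (J dω_J - K dω_K)`.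
In particular, `J dω_J = K dω_K` implies that `I` is integrable. -/
theorem statement3 {n : ℕ} {C V : Type*} [CommRing C] [Algebra ℝ C] [AddCommGroup V]
    [Module C V] [Module ℝ V] [IsScalarTower ℝ C V] (M : AQH n C V) :
    ((2:ℝ) • M.nij3 M.I
      = (op12 M.I (op23 M.J (act3 M.J (M.d2 (M.omega M.J)) - act3 M.K (M.d2 (M.omega M.K))))
          + op13 M.I (op23 M.J (act3 M.J (M.d2 (M.omega M.J)) - act3 M.K (M.d2 (M.omega M.K))))
          + op23 M.I (op23 M.J (act3 M.J (M.d2 (M.omega M.J)) - act3 M.K (M.d2 (M.omega M.K)))))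
        - op23 M.J (act3 M.J (M.d2 (M.omega M.J)) - act3 M.K (M.d2 (M.omega M.K)))) ∧
    ((2:ℝ) • M.nij3 M.I
      = (op23 M.K (act3 M.J (M.d2 (M.omega M.J)) - act3 M.K (M.d2 (M.omega M.K)))
          - op23 M.J (act3 M.J (M.d2 (M.omega M.J)) - act3 M.K (M.d2 (M.omega M.K))))
        - op12 M.I (op23 M.K (act3 M.J (M.d2 (M.omega M.J)) - act3 M.K (M.d2 (M.omega M.K)))
          - op23 M.J (act3 M.J (M.d2 (M.omega M.J)) - act3 M.K (M.d2 (M.omega M.K))))) ∧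
    (act3 M.J (M.d2 (M.omega M.J)) = act3 M.K (M.d2 (M.omega M.K)) →
      ∀ X Y, M.nijV M.I X Y = 0) := by
  have key : ∀ X Y Z, _ ∧ _ := fun X Y Z =>
    h_alg M.I M.J M.K (M.tA M.J) (M.tA M.K) X Y Z M.h_I_neg M.h_J_neg M.h_K_neg M.I_sq M.J_sq
    (by simp [M.K_def, M.h_JI, M.I_sq, M.J_sq, M.h_I_neg])
    (by simp [M.K_def])
    (by simp [M.K_def, M.h_JI])
    (by simp [M.K_def, M.h_JI, M.J_sq, M.h_I_neg])
    (by simp [M.K_def, M.J_sq, M.h_I_neg])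
    (by simp [M.K_def, M.h_JI, M.I_sq, M.h_I_neg])
    (by simp [M.K_def, M.I_sq])
    (M.h_tA_neg1 _ M.h_J_neg) (M.h_tA_neg2 _) (M.h_tA_neg3 _ M.h_J_neg)
    (M.h_tA_neg1 _ M.h_K_neg) (M.h_tA_neg2 _) (M.h_tA_neg3 _ M.h_K_neg)
    M.h_tA_bJ M.h_tA_bK M.h_tA_cross (M.tA M.I) (M.d2 (M.omega M.J)) (M.d2 (M.omega M.K))
    (act3 M.J (M.d2 (M.omega M.J)) - act3 M.K (M.d2 (M.omega M.K))) (M.nij3 M.I)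
    M.h_tA_I (fun X Y Z => M.h_d2 _ M.h_gJ X Y Z M.h_J_sub)
    (fun X Y Z => M.h_d2 _ M.h_gK X Y Z M.h_K_sub) (fun _ _ _ => rfl) M.h_nij
  have two : ∀ x : C, (2:ℝ) • x = 2 * x := fun x => by
    rw [two_smul, two_mul]
  refine ⟨?_, ?_, ?_⟩
  · funext X Y Z
    exact (two _).trans (key X Y Z).1
  · funext X Y Z
    exact (two _).trans (key X Y Z).2
  · intro h X Y
    have hz : ∀ W, M.g W (M.nijV M.I X Y) = 0 := by
      intro W
      have h1 := (key W X Y).1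
      rw [h, sub_self] at h1
      simp only [Pi.zero_apply, add_zero, sub_zero] at h1
      rw [← two] at h1
      have h2 : M.nij3 M.I W X Y = (2:ℝ)⁻¹ • ((2:ℝ) • M.nij3 M.I W X Y) := by
        rw [smul_smul]; norm_num
      rw [h1, smul_zero] at h2
      exact h2
    rw [M.frame_span (M.nijV M.I X Y)]
    refine Finset.sum_eq_zero fun i _ => ?_
    rw [M.g_symm, hz, zero_smul]
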